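/- arXiv:2504.02808 — 6 statements merged into one kernel-verified Lean document; each statement's English description precedes it below -/
import Mathlib

section
/- Let n be a natural number and let U be a complex n×n matrix. Then U is unitary (Uᴴ·U = I_n) if and only if the real (2n)×(2n) matrix V := Γ(U)·Z_n is orthogonal and antisymplectic, i.e. Vᵀ·V = I_{2n} and V·J_n = −J_n·V. -/
/-!
The real representation `Γ` is an injective ring homomorphism carrying conjugate transpose to
transpose, and `Z` is a symmetric involution. Hence `V = Γ(U) Z` satisfies
`Vᵀ V = Z Γ(Uᴴ U) Z`, which equals `1 = Z Γ(1) Z` exactly when `Uᴴ U = 1`. Antisymplecticity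
imposes no condition on `U`: `Γ(U)` commutes with `J` (complex linearity) and `Z`
anticommutes with `J` (complex conjugation is antilinear).
-/

open Matrix

/-- The real representation of a complex `n × n` matrix `M`:
`Γ(M) = [[Re M, −Im M],[Im M, Re M]]` as a real `2n × 2n` matrix. -/
def Gamma (n : ℕ) (M : Matrix (Fin n) (Fin n) ℂ) :
    Matrix (Fin n ⊕ Fin n) (Fin n ⊕ Fin n) ℝ :=
  Matrix.fromBlocks (M.map Complex.re) (-(M.map Complex.im))
    (M.map Complex.im) (M.map Complex.re)

/-- The real `2n × 2n` matrix `J_n = [[0, −I],[I, 0]]` representing the imaginary unit. -/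
def Jmat (n : ℕ) : Matrix (Fin n ⊕ Fin n) (Fin n ⊕ Fin n) ℝ :=
  Matrix.fromBlocks 0 (-1) 1 0
/-- The real `2n × 2n` matrix `Z_n = [[I, 0],[0, −I]]`. -/
def Zmat (n : ℕ) : Matrix (Fin n ⊕ Fin n) (Fin n ⊕ Fin n) ℝ :=
  Matrix.fromBlocks 1 0 0 (-1)


theorem gamma_mul (n : ℕ) (M N : Matrix (Fin n) (Fin n) ℂ) :
    Gamma n (M * N) = Gamma n M * Gamma n N := by
  have hre : (M * N).map Complex.re = M.map Complex.re * N.map Complex.re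
      - M.map Complex.im * N.map Complex.im := by
    ext i j
    simp [Matrix.mul_apply, Finset.sum_sub_distrib]
  have him : (M * N).map Complex.im = M.map Complex.re * N.map Complex.im
      + M.map Complex.im * N.map Complex.re := by
    ext i j
    simp [Matrix.mul_apply, Finset.sum_add_distrib]
  simp only [Gamma, fromBlocks_multiply, hre, him, fromBlocks_inj, Matrix.mul_neg,
    Matrix.neg_mul]
  refine ⟨by abel, by abel, by abel, by abel⟩

theorem gamma_conjTranspose (n : ℕ) (M : Matrix (Fin n) (Fin n) ℂ) :
    Gamma n Mᴴ = (Gamma n M)ᵀ := by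
  simp only [Gamma, fromBlocks_transpose, fromBlocks_inj]
  refine ⟨?_, ?_, ?_, ?_⟩ <;> ext i j <;> simp

theorem gamma_one (n : ℕ) : Gamma n 1 = 1 := by
  rw [Gamma, ← fromBlocks_one, fromBlocks_inj]
  refine ⟨?_, ?_, ?_, ?_⟩ <;> ext i j <;> by_cases h : i = j <;> simp [h, Matrix.one_apply]

theorem gamma_injective (n : ℕ) : Function.Injective (Gamma n) := by
  intro M N h
  obtain ⟨hre, -, him, -⟩ := fromBlocks_inj.mp h
  ext i j
  exact Complex.ext (congrFun₂ hre i j) (congrFun₂ him i j)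

theorem zmat_mul_self (n : ℕ) : Zmat n * Zmat n = 1 := by
  simp [Zmat, fromBlocks_multiply]

theorem zmat_transpose (n : ℕ) : (Zmat n)ᵀ = Zmat n := by
  simp [Zmat, fromBlocks_transpose]

/-- `J = Γ(i)`, so this expresses that `Γ(M)` is complex linear. -/
theorem gamma_mul_jmat (n : ℕ) (M : Matrix (Fin n) (Fin n) ℂ) :
    Gamma n M * Jmat n = Jmat n * Gamma n M := by
  simp [Gamma, Jmat, fromBlocks_multiply]

/-- `Z` represents entrywise complex conjugation, which is antilinear. -/
theorem zmat_mul_jmat (n : ℕ) : Zmat n * Jmat n = -(Jmat n * Zmat n) := by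
  simp [Zmat, Jmat, fromBlocks_multiply, fromBlocks_neg]

/-- `U` is unitary iff the matrix `V = Γ(U)·Z_n` (the image of the antiunitary `UK`)
is orthogonal and antisymplectic. -/
theorem gamma_antiunitary_iff_antiorthosymplectic (n : ℕ)
    (U : Matrix (Fin n) (Fin n) ℂ) :
    Uᴴ * U = 1 ↔
      ((Gamma n U * Zmat n)ᵀ * (Gamma n U * Zmat n) = 1 ∧
       (Gamma n U * Zmat n) * Jmat n = -(Jmat n * (Gamma n U * Zmat n))) := by
  have hanti : (Gamma n U * Zmat n) * Jmat n = -(Jmat n * (Gamma n U * Zmat n)) := by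
    rw [Matrix.mul_assoc, zmat_mul_jmat, Matrix.mul_neg, ← Matrix.mul_assoc, gamma_mul_jmat,
      Matrix.mul_assoc]
  have hV : (Gamma n U * Zmat n)ᵀ * (Gamma n U * Zmat n)
      = Zmat n * Gamma n (Uᴴ * U) * Zmat n := by
    rw [transpose_mul, zmat_transpose, gamma_mul, gamma_conjTranspose]
    simp only [Matrix.mul_assoc]
  rw [and_iff_left hanti, hV]
  constructor
  · intro h
    rw [h, gamma_one, Matrix.mul_one, zmat_mul_self]
  · intro h
    apply gamma_injective n
    -- Conjugating by the involution `Z` once more recovers `Γ(Uᴴ U)`.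
    calc Gamma n (Uᴴ * U)
        = (Zmat n * Zmat n) * Gamma n (Uᴴ * U) * (Zmat n * Zmat n) := by
          rw [zmat_mul_self, Matrix.one_mul, Matrix.mul_one]
      _ = Zmat n * (Zmat n * Gamma n (Uᴴ * U) * Zmat n) * Zmat n := by
          simp only [Matrix.mul_assoc]
      _ = Gamma n 1 := by
          rw [h, Matrix.mul_one, zmat_mul_self, gamma_one]
end

section
/- Let n, m be natural numbers. For every complex n×n matrix M and every complex m×m matrix N, (1/2)·(Γ(M) ⊗ Γ(N) − Γ(iM) ⊗ Γ(iN)) = (1/2)·(I_{2n} ⊗ I_{2m} − J_n ⊗ J_m)·(Γ(M) ⊗ Γ(N)) = (Γ(M) ⊗ Γ(N))·(1/2)·(I_{2n} ⊗ I_{2m} − J_n ⊗ J_m), where i is the imaginary unit. -/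
/-!
The real representation `Γ` turns multiplication by the imaginary unit into multiplication by `J`
on either side: `Γ(iM) = J_n Γ(M) = Γ(M) J_n` (`Gamma_I_smul_left`, `Gamma_I_smul_right`).
By the mixed-product property of the Kronecker product,
`Γ(iM) ⊗ Γ(iN) = (J_n ⊗ J_m)(Γ(M) ⊗ Γ(N)) = (Γ(M) ⊗ Γ(N))(J_n ⊗ J_m)`, so both identities follow
by distributing the product over `I ⊗ I − J_n ⊗ J_m`.
-/

open Matrix

open Kronecker

theorem Gamma_I_smul_left (n : ℕ) (M : Matrix (Fin n) (Fin n) ℂ) :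
    Gamma n (Complex.I • M) = Jmat n * Gamma n M := by
  unfold Gamma Jmat
  rw [Matrix.fromBlocks_multiply]
  congr 1 <;> ext i j <;> simp

theorem Gamma_I_smul_right (n : ℕ) (M : Matrix (Fin n) (Fin n) ℂ) :
    Gamma n (Complex.I • M) = Gamma n M * Jmat n := by
  unfold Gamma Jmat
  rw [Matrix.fromBlocks_multiply]
  congr 1 <;> ext i j <;> simp

/-- The mixed combination `½(Γ(M) ⊗ Γ(N) − Γ(iM) ⊗ Γ(iN))` equals left or right
multiplication of `Γ(M) ⊗ Γ(N)` by the projector `½(I ⊗ I − J_n ⊗ J_m)`. -/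
theorem mixed_combination_eq (n m : ℕ)
    (M : Matrix (Fin n) (Fin n) ℂ) (N : Matrix (Fin m) (Fin m) ℂ) :
    (1/2 : ℝ) • (Gamma n M ⊗ₖ Gamma m N -
        Gamma n (Complex.I • M) ⊗ₖ Gamma m (Complex.I • N)) =
      ((1/2 : ℝ) • ((1 : Matrix (Fin n ⊕ Fin n) (Fin n ⊕ Fin n) ℝ) ⊗ₖ
          (1 : Matrix (Fin m ⊕ Fin m) (Fin m ⊕ Fin m) ℝ) - Jmat n ⊗ₖ Jmat m)) *
        (Gamma n M ⊗ₖ Gamma m N) ∧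
    (1/2 : ℝ) • (Gamma n M ⊗ₖ Gamma m N -
        Gamma n (Complex.I • M) ⊗ₖ Gamma m (Complex.I • N)) =
      (Gamma n M ⊗ₖ Gamma m N) *
        ((1/2 : ℝ) • ((1 : Matrix (Fin n ⊕ Fin n) (Fin n ⊕ Fin n) ℝ) ⊗ₖ
          (1 : Matrix (Fin m ⊕ Fin m) (Fin m ⊕ Fin m) ℝ) - Jmat n ⊗ₖ Jmat m)) := by
  constructor
  · rw [Gamma_I_smul_left, Gamma_I_smul_left, Matrix.mul_kronecker_mul, Matrix.one_kronecker_one,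
      Matrix.smul_mul, Matrix.sub_mul, Matrix.one_mul]
  · rw [Gamma_I_smul_right, Gamma_I_smul_right, Matrix.mul_kronecker_mul,
      Matrix.one_kronecker_one, Matrix.mul_smul, Matrix.mul_sub, Matrix.mul_one]
end

section
/- Let n, m be natural numbers. For every real number θ, every complex n×n matrix M, and every complex m×m matrix N, setting c := exp(iθ), one has Γ(c·M) ⊗ Γ(N) − Γ(i·c·M) ⊗ Γ(i·N) = Γ(M) ⊗ Γ(c·N) − Γ(i·M) ⊗ Γ(i·c·N), where i is the imaginary unit. (The phase freedom of the complex tensor product is preserved by the real combination rule.) -/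
/-! For `z = a + b i` one has `Γ(z M) = a Γ(M) + b Γ(i M)` and `Γ(i z M) = a Γ(i M) - b Γ(M)`, since
`Γ` is real-linear and `i² = -1`. By bilinearity of `⊗ₖ`, both sides of the identity equal
`a (Γ(M) ⊗ Γ(N) - Γ(iM) ⊗ Γ(iN)) + b (Γ(iM) ⊗ Γ(N) + Γ(M) ⊗ Γ(iN))`
with `a + b i = exp (i θ)`; that the phase has modulus one plays no role. -/

open Matrix Kronecker

theorem Gamma_smul (n : ℕ) (z : ℂ) (M : Matrix (Fin n) (Fin n) ℂ) :
    Gamma n (z • M) = z.re • Gamma n M + z.im • Gamma n (Complex.I • M) := by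
  ext (i | i) (j | j) <;> simp [Gamma] <;> ring

theorem Gamma_I_mul_smul (n : ℕ) (z : ℂ) (M : Matrix (Fin n) (Fin n) ℂ) :
    Gamma n ((Complex.I * z) • M) = z.re • Gamma n (Complex.I • M) - z.im • Gamma n M := by
  rw [Gamma_smul]
  simp
  abel

/-- The phase freedom of the complex tensor product is preserved by the real
combination rule `Γ(M) ∧⊗ Γ(N) := Γ(M) ⊗ Γ(N) − Γ(iM) ⊗ Γ(iN)` (up to the factor ½). -/
theorem phase_freedom_preserved (n m : ℕ) (θ : ℝ)
    (M : Matrix (Fin n) (Fin n) ℂ) (N : Matrix (Fin m) (Fin m) ℂ) :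
    Gamma n (Complex.exp (θ * Complex.I) • M) ⊗ₖ Gamma m N -
      Gamma n ((Complex.I * Complex.exp (θ * Complex.I)) • M) ⊗ₖ Gamma m (Complex.I • N) =
    Gamma n M ⊗ₖ Gamma m (Complex.exp (θ * Complex.I) • N) -
      Gamma n (Complex.I • M) ⊗ₖ Gamma m ((Complex.I * Complex.exp (θ * Complex.I)) • N) := by
  rw [Gamma_smul n (Complex.exp _), Gamma_smul m (Complex.exp _), Gamma_I_mul_smul,
    Gamma_I_mul_smul]
  ext p q
  simp only [Matrix.sub_apply, Matrix.add_apply, Matrix.smul_apply, kroneckerMap_apply, smul_eq_mul]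
  ring
end

section
/- Let n, m be natural numbers. For all Hermitian complex matrices H₁, H₂ (n×n) and L₁, L₂ (m×m), trace((Γ(H₁) ⊗ Γ(L₁))·(Γ(H₂) ⊗ Γ(L₂))) = 4 · Re(trace((H₁ ⊗ L₁)·(H₂ ⊗ L₂))). (Thus the real representation with the tensor-product combination rule reproduces all measurement statistics of complex quantum theory on product states and effects, up to the normalization factor 4.) -/
/-!
The Kronecker product is compatible with multiplication and turns traces into products, so both
sides factor through `trace (H₁ * H₂)` and `trace (L₁ * L₂)`. Since `Γ` is multiplicative with two
diagonal blocks equal to the real part, `trace (Γ(A) * Γ(B)) = 2 * Re (trace (A * B))`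
(`trace_Gamma_mul`). What remains is `Re z * Re w = Re (z * w)`, which holds because the trace of a
product of two Hermitian matrices is real
(`im_trace_mul_of_hermitian`).
-/

open Matrix Kronecker

theorem trace_Gamma_mul (n : ℕ) (A B : Matrix (Fin n) (Fin n) ℂ) :
    (Gamma n A * Gamma n B).trace = 2 * ((A * B).trace).re := by
  simp only [Gamma, fromBlocks_multiply, trace, diag_apply, Fintype.sum_sum_type,
    fromBlocks_apply₁₁, fromBlocks_apply₂₂, Matrix.add_apply,
    mul_apply, Matrix.neg_apply, map_apply, Complex.re_sum, Complex.mul_re,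
    Finset.sum_sub_distrib, Finset.sum_add_distrib, Matrix.neg_mul, Matrix.mul_neg,
    Finset.sum_neg_distrib]
  ring

theorem im_trace_mul_of_hermitian (n : ℕ) (A B : Matrix (Fin n) (Fin n) ℂ)
    (hA : Aᴴ = A) (hB : Bᴴ = B) : ((A * B).trace).im = 0 := by
  rw [← Complex.conj_eq_iff_im, starRingEnd_apply, ← trace_conjTranspose, conjTranspose_mul,
    hA, hB, trace_mul_comm]

/-- The real representation with the tensor-product combination rule reproduces the
statistics of complex quantum theory on products, up to the normalization factor 4. -/
theorem gamma_kron_trace (n m : ℕ)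
    (H₁ H₂ : Matrix (Fin n) (Fin n) ℂ) (L₁ L₂ : Matrix (Fin m) (Fin m) ℂ)
    (hH₁ : H₁ᴴ = H₁) (hH₂ : H₂ᴴ = H₂) (hL₁ : L₁ᴴ = L₁) (hL₂ : L₂ᴴ = L₂) :
    ((Gamma n H₁ ⊗ₖ Gamma m L₁) * (Gamma n H₂ ⊗ₖ Gamma m L₂)).trace =
      4 * (((H₁ ⊗ₖ L₁) * (H₂ ⊗ₖ L₂)).trace).re := by
  rw [← mul_kronecker_mul, ← mul_kronecker_mul, trace_kronecker, trace_kronecker,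
    trace_Gamma_mul, trace_Gamma_mul, Complex.mul_re, im_trace_mul_of_hermitian n H₁ H₂ hH₁ hH₂,
    im_trace_mul_of_hermitian m L₁ L₂ hL₁ hL₂]
  ring
end

section
/- Let Φ be the complex 4×4 density matrix of the two-qubit Bell state |Φ⁺⟩ = (|00⟩ + |11⟩)/√2, indexed by pairs (a,b) with a,b ∈ {0,1}, so that Φ has entry 1/2 at position ((a,a),(b,b)) for a,b ∈ {0,1} and 0 elsewhere. Then for every natural number k, all Hermitian complex 2×2 matrices H₁, …, H_k and L₁, …, L_k, and all real numbers c₁, …, c_k such that Σ_{j=1}^{k} c_j · (H_j ⊗ L_j) = Φ, the real 16×16 matrix Σ_{j=1}^{k} c_j · (Γ(H_j) ⊗ Γ(L_j)) is not positive semi-definite. (The image of the Bell state under the linear extension of Γ ⊗ Γ has a negative eigenvalue.) -/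
/-!
In the Pauli basis `4 Φ = I ⊗ I + X ⊗ X - Y ⊗ Y + Z ⊗ Z`. The map `Γ` sends `X, Z` to `I ⊗ X, I ⊗ Z`
and `Y` to `J ⊗ K`, where `J = K = [[0, -1], [1, 0]]`, so on the `+1` eigenspace of `J ⊗ J` the image
of `4 Φ` acts on the two qubits as `I ⊗ I + X ⊗ X + Y ⊗ Y + Z ⊗ Z`, twice the swap. The
singlet is a `-1` eigenvector of the swap, so `bellWitness`, the eigenvector `e₀e₀ + e₁e₁` of `J ⊗ J`
tensored with the singlet `|01⟩ - |10⟩`, has a negative quadratic form.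

The proof evaluates that form without the Pauli expansion: for Hermitian `L`, the quadratic form of
`Γ(H) ⊗ Γ(L)` at the witness is twice the real part of a signed sum of four entries of `H ⊗ L`
(`quadForm_Gamma_kronecker`). By linearity the total form is the same expression in the entries
of `Φ`, namely `2 (0 - 1/2 - 1/2 + 0) = -2`.
-/

open Matrix Kronecker

/-- The density matrix of the two-qubit Bell state `|Φ⁺⟩ = (|00⟩ + |11⟩)/√2`,
with entry `1/2` at position `((a,a),(b,b))` and `0` elsewhere. -/
noncomputable def BellPhi : Matrix (Fin 2 × Fin 2) (Fin 2 × Fin 2) ℂ :=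
  Matrix.of fun p q => if p.1 = p.2 ∧ q.1 = q.2 then (1/2 : ℂ) else 0

/-- The unnormalised vector `(e₀ ⊗ e₀ + e₁ ⊗ e₁) ⊗ (|01⟩ - |10⟩)`. In each factor `Fin 2 ⊕ Fin 2`
the summand (`inl` or `inr`) is the `e₀`/`e₁` index and the entry of `Fin 2` the qubit index. -/
def bellWitness : (Fin 2 ⊕ Fin 2) × (Fin 2 ⊕ Fin 2) → ℝ
  | (Sum.inl a, Sum.inl b) => !![0, 1; -1, 0] a b
  | (Sum.inr a, Sum.inr b) => !![0, 1; -1, 0] a b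
  | _ => 0

/-- The quadratic form produces products `Re · Re + Im · Im`, that is `Re (H_ab · conj L_cd)`;
Hermiticity of `L` turns `conj L_cd` into `L_dc`, giving entries of `H ⊗ L`. -/
lemma quadForm_Gamma_kronecker (H L : Matrix (Fin 2) (Fin 2) ℂ) (hL : Lᴴ = L) :
    bellWitness ⬝ᵥ ((Gamma 2 H ⊗ₖ Gamma 2 L) *ᵥ bellWitness) =
      2 * ((H ⊗ₖ L) (0, 1) (0, 1) - (H ⊗ₖ L) (0, 0) (1, 1)
        - (H ⊗ₖ L) (1, 1) (0, 0) + (H ⊗ₖ L) (1, 0) (1, 0)).re := by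
  have hL' (a b : Fin 2) : star (L b a) = L a b := congrFun (congrFun hL a) b
  have hre (a b : Fin 2) : (L b a).re = (L a b).re := by
    simpa using congrArg Complex.re (hL' a b)
  have him (a b : Fin 2) : -(L b a).im = (L a b).im := by
    simpa using congrArg Complex.im (hL' a b)
  have h00 := him 0 0
  have h11 := him 1 1
  have h0 : (L 0 0).im = 0 := by linarith
  have h1 : (L 1 1).im = 0 := by linarith
  simp [dotProduct, mulVec, Fintype.sum_prod_type, Fintype.sum_sum_type, Fin.sum_univ_two,
    bellWitness, Gamma, kroneckerMap_apply, h0, h1, hre 0 1, ← him 0 1]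
  ring

/-- The image of the Bell state under the linear extension of `Γ ⊗ Γ` is not
positive semi-definite. -/
theorem bell_image_not_posSemidef (k : ℕ)
    (H L : Fin k → Matrix (Fin 2) (Fin 2) ℂ) (c : Fin k → ℝ)
    (hH : ∀ j, (H j)ᴴ = H j) (hL : ∀ j, (L j)ᴴ = L j)
    (hsum : ∑ j : Fin k, (c j : ℂ) • (H j ⊗ₖ L j) = BellPhi) :
    ¬ (∑ j : Fin k, c j • (Gamma 2 (H j) ⊗ₖ Gamma 2 (L j))).PosSemidef := by
  intro hpos
  have hnonneg := hpos.dotProduct_mulVec_nonneg bellWitness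
  have hentry (p q : Fin 2 × Fin 2) :
      ∑ j, (c j : ℂ) * (H j ⊗ₖ L j) p q = BellPhi p q := by
    rw [← hsum]
    simp [Matrix.sum_apply]
  have hform : bellWitness ⬝ᵥ
      ((∑ j, c j • (Gamma 2 (H j) ⊗ₖ Gamma 2 (L j))) *ᵥ bellWitness) =
      2 * (BellPhi (0, 1) (0, 1) - BellPhi (0, 0) (1, 1)
        - BellPhi (1, 1) (0, 0) + BellPhi (1, 0) (1, 0)).re := by
    simp only [← hentry, ← Finset.sum_sub_distrib, ← Finset.sum_add_distrib, ← mul_sub, ← mul_add,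
      Complex.re_sum, Complex.re_ofReal_mul, Matrix.sum_mulVec, dotProduct_sum, smul_mulVec,
      dotProduct_smul, smul_eq_mul, quadForm_Gamma_kronecker _ _ (hL _), Finset.mul_sum]
    exact Finset.sum_congr rfl fun j _ => by ring
  rw [star_trivial, hform] at hnonneg
  norm_num [BellPhi] at hnonneg
end

section
/- Let n be a natural number. The set of real (2n)×(2n) matrices S satisfying Sᵀ = S and S·J_n = J_n·S (the special symmetric matrices) is an ℝ-linear subspace of the real (2n)×(2n) matrices of dimension n². -/
/-!
Commuting with `J_n` forces the block form `S = [[A, −B],[B, A]]`, and symmetry of `S` then means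
that `A` is symmetric and `B` is antisymmetric. Since every real `n × n` matrix is uniquely the sum
of a symmetric and an antisymmetric one, `S ↦ A + B` is a linear isomorphism from the special
symmetric matrices onto all `n × n` matrices (`specialSymEquiv`), a space of dimension `n²`.
-/

open Matrix

/-- The special symmetric matrices: real `2n × 2n` matrices that are symmetric and
commute with `J_n`, as an ℝ-linear subspace of the real `2n × 2n` matrices. -/
def specialSym (n : ℕ) : Submodule ℝ (Matrix (Fin n ⊕ Fin n) (Fin n ⊕ Fin n) ℝ) where
  carrier := {S | Sᵀ = S ∧ S * Jmat n = Jmat n * S}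
  add_mem' := by
    rintro a b ⟨ha1, ha2⟩ ⟨hb1, hb2⟩
    refine ⟨?_, ?_⟩
    · rw [Matrix.transpose_add, ha1, hb1]
    · rw [Matrix.add_mul, Matrix.mul_add, ha2, hb2]
  zero_mem' := by
    refine ⟨?_, ?_⟩
    · simp
    · simp
  smul_mem' := by
    rintro c a ⟨ha1, ha2⟩
    refine ⟨?_, ?_⟩
    · rw [Matrix.transpose_smul, ha1]
    · rw [Matrix.smul_mul, Matrix.mul_smul, ha2]

theorem mem_specialSym_fromBlocks {n : ℕ} (A B C D : Matrix (Fin n) (Fin n) ℝ) :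
    Matrix.fromBlocks A B C D ∈ specialSym n ↔ Aᵀ = A ∧ Cᵀ = -C ∧ B = -C ∧ D = A := by
  change (Matrix.fromBlocks A B C D)ᵀ = _ ∧ _ * Jmat n = Jmat n * _ ↔ _
  simp only [Jmat, Matrix.fromBlocks_transpose, Matrix.fromBlocks_multiply,
    Matrix.fromBlocks_inj, mul_zero, mul_one, zero_mul, one_mul, zero_add, add_zero,
    mul_neg, neg_mul, neg_inj]
  constructor
  · rintro ⟨⟨hA, hCB, -, -⟩, hBC, hAD, -, -⟩
    exact ⟨hA, hCB.trans hBC, hBC, hAD.symm⟩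
  · rintro ⟨hA, hC, rfl, rfl⟩
    simp [hA, hC]

/-- The isomorphism `[[A, −B],[B, A]] ↦ A + B` from the special symmetric matrices to all `n × n`
matrices. Its inverse takes for `A` and `B` the symmetric and antisymmetric parts of a matrix. -/
noncomputable def specialSymEquiv (n : ℕ) :
    specialSym n ≃ₗ[ℝ] Matrix (Fin n) (Fin n) ℝ where
  toFun S := S.1.toBlocks₁₁ + S.1.toBlocks₂₁
  map_add' S T := by
    ext i j
    simp only [Submodule.coe_add, Matrix.toBlocks₁₁, Matrix.toBlocks₂₁, Matrix.add_apply,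
      Matrix.of_apply]
    ring
  map_smul' c S := by
    ext i j
    simp [Matrix.toBlocks₁₁, Matrix.toBlocks₂₁, mul_add]
  invFun M := ⟨Matrix.fromBlocks ((1 / 2 : ℝ) • (M + Mᵀ)) (-((1 / 2 : ℝ) • (M - Mᵀ)))
      ((1 / 2 : ℝ) • (M - Mᵀ)) ((1 / 2 : ℝ) • (M + Mᵀ)), by
    rw [mem_specialSym_fromBlocks]
    refine ⟨?_, ?_, rfl, rfl⟩
    · simp [add_comm]
    · simp [← smul_neg]⟩
  left_inv := by
    rintro ⟨S, hS⟩
    obtain ⟨A, B, C, D, rfl⟩ : ∃ A B C D, S = Matrix.fromBlocks A B C D :=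
      ⟨_, _, _, _, (Matrix.fromBlocks_toBlocks S).symm⟩
    obtain ⟨hA, hC, rfl, rfl⟩ := (mem_specialSym_fromBlocks A B C D).1 hS
    simp only [Subtype.mk.injEq, Matrix.toBlocks_fromBlocks₁₁, Matrix.toBlocks_fromBlocks₂₁,
      Matrix.transpose_add, hA, hC, Matrix.fromBlocks_inj, neg_inj]
    refine ⟨?_, ?_, ?_, ?_⟩ <;> module
  right_inv M := by
    simp only [Matrix.toBlocks_fromBlocks₁₁, Matrix.toBlocks_fromBlocks₂₁]
    module

/-- The space of special symmetric matrices has real dimension `n²`. -/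
theorem specialSym_finrank (n : ℕ) : Module.finrank ℝ (specialSym n) = n ^ 2 := by
  rw [(specialSymEquiv n).finrank_eq, Module.finrank_matrix]
  simp [sq]
end
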